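/- Let α > −1 and n ≥ 1, let ψ be analytic on 𝔻, not identically 0, and φ a nonconstant analytic self-map of 𝔻, and suppose D_{ψ,φ,n} is bounded and J-symmetric on A_α². Then φ is univalent (injective) on 𝔻. -/

import Mathlib

open Complex Metric Set

noncomputable section

/-- The open unit disk in `ℂ`. -/
def unitDisk : Set ℂ := Metric.ball 0 1

/-- `wb2 α j` is `β(j)² = j!·Γ(α+2)/Γ(j+α+2)`, the square of the norm of `z^j` in `A_α²`. -/
def wb2 (α : ℝ) (j : ℕ) : ℝ :=
  (j.factorial : ℝ) * Real.Gamma (α + 2) / Real.Gamma ((j : ℝ) + α + 2)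

/-- The `j`-th Taylor coefficient of `f` at `0`. -/
def tcoeff (f : ℂ → ℂ) (j : ℕ) : ℂ := iteratedDeriv j f 0 / (j.factorial : ℂ)

/-- An abstract model of the weighted Bergman space `A_α²`: a complex Hilbert space `H`
whose elements are (identified with) the analytic functions on the unit disk with
square-summable weighted Taylor coefficients, with the weighted `ℓ²` inner product. -/
structure BergmanModel (α : ℝ) (H : Type) [NormedAddCommGroup H]
    [InnerProductSpace ℂ H] where
  emb : H →ₗ[ℂ] (ℂ → ℂ)
  analyticOn : ∀ f : H, AnalyticOnNhd ℂ (emb f) unitDisk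
  summable_norm : ∀ f : H, Summable (fun j => ‖tcoeff (emb f) j‖ ^ 2 * wb2 α j)
  inj : ∀ f g : H, Set.EqOn (emb f) (emb g) unitDisk → f = g
  exists_rep : ∀ F : ℂ → ℂ, AnalyticOnNhd ℂ F unitDisk →
      Summable (fun j => ‖tcoeff F j‖ ^ 2 * wb2 α j) →
      ∃ f : H, Set.EqOn (emb f) F unitDisk
  inner_eq : ∀ f g : H,
      (@inner ℂ H _ f g) =
        ∑' j : ℕ, (starRingEnd ℂ) (tcoeff (emb f) j) * tcoeff (emb g) j * (wb2 α j : ℂ)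

/-- The derivative-evaluation kernel `K_w^{(m)}(z) = m!·z^m / (β(m)²·(1-conj(w)·z)^(m+α+2))`. -/
def kern (α : ℝ) (m : ℕ) (w z : ℂ) : ℂ :=
  (m.factorial : ℂ) * z ^ m /
    ((wb2 α m : ℂ) * (1 - (starRingEnd ℂ) w * z) ^ ((m : ℂ) + (α : ℂ) + 2))

/-!
Let `K x = (1 - x)^{-(α+2)}`, so that `z ↦ K (conj u * z)` is the reproducing kernel of `A_α²` at
`u`. Testing `J T* J = T` on two kernels gives, with `L` the `n`-th derivative of `K`,
`ψ(z) uⁿ L(u φ(z)) = ψ(u) zⁿ L(z φ(u))` for all `z, u ∈ 𝔻`. If `φ(z) = φ(w)`, comparing this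
identity with the one for `w` shows that `x ↦ zⁿ ψ(w) L(z x)` and `x ↦ wⁿ ψ(z) L(w x)` agree on the
open set `φ(𝔻)`, hence on `𝔻`; their values and derivatives at `0` give `z = w` unless `z` or `w`
is `0`. Injectivity on `𝔻 \ {0}` extends to `𝔻` because `φ` is an open map.
-/

open scoped Topology ComplexConjugate

theorem iteratedDeriv_comp_mul_left {𝕜 F : Type*} [NontriviallyNormedField 𝕜]
    [NormedAddCommGroup F] [NormedSpace 𝕜 F] (n : ℕ) (f : 𝕜 → F) (c x : 𝕜) :
    iteratedDeriv n (fun y => f (c * y)) x = c ^ n • iteratedDeriv n f (c * x) := by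
  induction n generalizing x with
  | zero => simp
  | succ n ih =>
    rw [iteratedDeriv_succ, funext ih, deriv_fun_const_smul_field,
      deriv_comp_mul_left c (iteratedDeriv n f), iteratedDeriv_succ, smul_smul, pow_succ]

theorem eq_of_mul_comp_mul_left_eventuallyEq {𝕜 : Type*} [NontriviallyNormedField 𝕜]
    {L : 𝕜 → 𝕜} (hL : L 0 ≠ 0) (hL' : deriv L 0 ≠ 0) {a b z w : 𝕜} (ha : a ≠ 0)
    (h : (fun x => a * L (z * x)) =ᶠ[𝓝 0] fun x => b * L (w * x)) : z = w := by
  have hab : a = b := by simpa [hL] using h.eq_of_nhds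
  have hderiv := h.deriv_eq
  simp only [deriv_const_mul_field, deriv_comp_mul_left, mul_zero, smul_eq_mul] at hderiv
  subst hab
  exact mul_right_cancel₀ hL' (mul_left_cancel₀ ha hderiv)

theorem injOn_of_injOn_diff_singleton {X Y : Type*} [TopologicalSpace X] [T2Space X]
    [TopologicalSpace Y] {f : X → Y} {U : Set X} {p : X} [(𝓝[≠] p).NeBot] (hU : IsOpen U)
    (hf : ContinuousOn f U) (hopen : ∀ s ⊆ U, IsOpen s → IsOpen (f '' s))
    (hinj : InjOn f (U \ {p})) : InjOn f U := by
  by_cases hp : p ∈ U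
  swap
  · rwa [sdiff_singleton_eq_self hp] at hinj
  rw [← insert_sdiff_self_of_mem hp, injOn_insert (fun h => h.2 rfl)]
  refine ⟨hinj, ?_⟩
  rintro ⟨q, ⟨hqU, hqp⟩, hfq⟩
  obtain ⟨V, W, hV, hW, hpV, hqW, hVW⟩ := t2_separation (Ne.symm hqp)
  have hfW : f '' (W ∩ U) ∈ 𝓝 (f p) :=
    (hopen _ inter_subset_right (hW.inter hU)).mem_nhds ⟨q, ⟨hqW, hqU⟩, hfq⟩
  have hnear : ∀ᶠ a in 𝓝[≠] p, a ∈ V ∧ a ∈ U ∧ f a ∈ f '' (W ∩ U) :=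
    nhdsWithin_le_nhds <| Filter.inter_mem (hV.mem_nhds hpV) <| Filter.inter_mem (hU.mem_nhds hp) <|
      (hf.continuousAt (hU.mem_nhds hp)).eventually_mem hfW
  obtain ⟨a, ⟨haV, haU, b, ⟨hbW, hbU⟩, hba⟩, hap⟩ :=
    (hnear.and eventually_mem_nhdsWithin).exists
  have hbp : b ≠ p := fun h => hVW.notMem_of_mem_left hpV (h ▸ hbW)
  have hab : b = a := hinj ⟨hbU, hbp⟩ ⟨haU, hap⟩ hba
  exact hVW.notMem_of_mem_left haV (hab ▸ hbW)

theorem isOpen_image_of_nonconstant {φ : ℂ → ℂ} {U s : Set ℂ} (hφ : AnalyticOnNhd ℂ φ U)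
    (hU : IsPreconnected U) (hne : ∃ z ∈ U, ∃ w ∈ U, φ z ≠ φ w) (hsU : s ⊆ U) (hs : IsOpen s) :
    IsOpen (φ '' s) := by
  refine hφ.is_constant_or_isOpen hU |>.resolve_left ?_ s hsU hs
  rintro ⟨c, hc⟩
  obtain ⟨z, hz, w, hw, hzw⟩ := hne
  exact hzw ((hc z hz).trans (hc w hw).symm)

section Rigidity

variable {U V : Set ℂ} {ψ φ L p : ℂ → ℂ}

theorem eqOn_zero_of_comp_eqOn_zero {h : ℂ → ℂ} (hUo : IsOpen U) (hU : IsPreconnected U)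
    (hV : IsPreconnected V) (hφ : AnalyticOnNhd ℂ φ U) (hφV : MapsTo φ U V)
    (hφne : ∃ z ∈ U, ∃ w ∈ U, φ z ≠ φ w) (hh : AnalyticOnNhd ℂ h V)
    (h0 : ∀ z ∈ U, h (φ z) = 0) : EqOn h 0 V := by
  have hopen : IsOpen (φ '' U) := isOpen_image_of_nonconstant hφ hU hφne subset_rfl hUo
  obtain ⟨z, hz, -⟩ := hφne
  refine hh.eqOn_zero_of_preconnected_of_eventuallyEq_zero hV (hφV hz) ?_
  filter_upwards [hopen.mem_nhds (mem_image_of_mem φ hz)]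
  rintro _ ⟨u, hu, rfl⟩
  exact h0 u hu

theorem eqOn_zero_of_mul_comp_eqOn_zero {h : ℂ → ℂ} (hUo : IsOpen U) (hU : IsPreconnected U)
    (hV : IsPreconnected V) (hψ : AnalyticOnNhd ℂ ψ U) (hψ0 : ∃ z ∈ U, ψ z ≠ 0)
    (hφ : AnalyticOnNhd ℂ φ U) (hφV : MapsTo φ U V) (hφne : ∃ z ∈ U, ∃ w ∈ U, φ z ≠ φ w)
    (hh : AnalyticOnNhd ℂ h V) (h0 : ∀ z ∈ U, ψ z * h (φ z) = 0) : EqOn h 0 V := by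
  refine eqOn_zero_of_comp_eqOn_zero hUo hU hV hφ hφV hφne hh ?_
  refine (hψ.eq_zero_or_eq_zero_of_mul_eq_zero (hh.comp hφ hφV) h0 hU).resolve_left fun h => ?_
  obtain ⟨z, hz, hψz⟩ := hψ0
  exact hψz (h z hz)

theorem weight_ne_zero_of_symm_identity (hUo : IsOpen U) (hU : IsPreconnected U)
    (hV : IsPreconnected V) (h0V : (0 : ℂ) ∈ V)
    (hL : ∀ z ∈ U, AnalyticOnNhd ℂ (fun x => L (z * x)) V) (hL0 : L 0 ≠ 0)
    (hψ : AnalyticOnNhd ℂ ψ U) (hψ0 : ∃ z ∈ U, ψ z ≠ 0) (hφ : AnalyticOnNhd ℂ φ U)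
    (hφV : MapsTo φ U V) (hφne : ∃ z ∈ U, ∃ w ∈ U, φ z ≠ φ w)
    (hsymm : ∀ z ∈ U, ∀ u ∈ U, ψ z * (p u * L (u * φ z)) = ψ u * (p z * L (z * φ u)))
    {z : ℂ} (hz : z ∈ U) (hpz : p z ≠ 0) : ψ z ≠ 0 := by
  intro hψz
  have hvanish : EqOn (fun x => p z * L (z * x)) 0 V :=
    eqOn_zero_of_mul_comp_eqOn_zero hUo hU hV hψ hψ0 hφ hφV hφne
      (analyticOnNhd_const.mul (hL z hz)) fun u hu => by rw [← hsymm z hz u hu, hψz, zero_mul]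
  have := hvanish h0V
  simp [hpz, hL0] at this

theorem injOn_of_symm_identity (hUo : IsOpen U) (hU : IsPreconnected U)
    (hV : IsPreconnected V) (h0V : V ∈ 𝓝 0)
    (hL : ∀ z ∈ U, AnalyticOnNhd ℂ (fun x => L (z * x)) V) (hL0 : L 0 ≠ 0)
    (hL' : deriv L 0 ≠ 0) (hψ : AnalyticOnNhd ℂ ψ U) (hψ0 : ∃ z ∈ U, ψ z ≠ 0)
    (hφ : AnalyticOnNhd ℂ φ U) (hφV : MapsTo φ U V) (hφne : ∃ z ∈ U, ∃ w ∈ U, φ z ≠ φ w)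
    (hsymm : ∀ z ∈ U, ∀ u ∈ U, ψ z * (p u * L (u * φ z)) = ψ u * (p z * L (z * φ u))) :
    InjOn φ {z ∈ U | p z ≠ 0} := by
  rintro z ⟨hz, hpz⟩ w ⟨hw, hpw⟩ hzw
  have hψw : ψ w ≠ 0 := weight_ne_zero_of_symm_identity hUo hU hV (mem_of_mem_nhds h0V) hL hL0
    hψ hψ0 hφ hφV hφne hsymm hw hpw
  have hvanish : EqOn (fun x => ψ w * p z * L (z * x) - ψ z * p w * L (w * x)) 0 V := by
    refine eqOn_zero_of_mul_comp_eqOn_zero hUo hU hV hψ hψ0 hφ hφV hφne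
      ((analyticOnNhd_const.mul (hL z hz)).sub (analyticOnNhd_const.mul (hL w hw))) fun u hu => ?_
    have hz_u := hsymm z hz u hu
    have hw_u := hsymm w hw u hu
    rw [hzw] at hz_u
    linear_combination ψ z * hw_u - ψ w * hz_u
  refine eq_of_mul_comp_mul_left_eventuallyEq hL0 hL' (mul_ne_zero hψw hpz) (b := ψ z * p w) ?_
  filter_upwards [h0V] with x hx using sub_eq_zero.mp (hvanish hx)

end Rigidity

theorem mem_unitDisk {z : ℂ} : z ∈ unitDisk ↔ ‖z‖ < 1 := mem_ball_zero_iff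

theorem isOpen_unitDisk : IsOpen unitDisk := isOpen_ball

theorem isPreconnected_unitDisk : IsPreconnected unitDisk :=
  (convex_ball (0 : ℂ) 1).isPreconnected

theorem unitDisk_mem_nhds_zero : unitDisk ∈ 𝓝 0 := ball_mem_nhds 0 one_pos

theorem mul_mem_unitDisk {z w : ℂ} (hz : z ∈ unitDisk) (hw : w ∈ unitDisk) :
    z * w ∈ unitDisk := by
  rw [mem_unitDisk] at *
  rw [norm_mul]
  exact mul_lt_one_of_nonneg_of_lt_one_left (norm_nonneg z) hz hw.le

theorem conj_mem_unitDisk {z : ℂ} (hz : z ∈ unitDisk) : conj z ∈ unitDisk := by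
  rwa [mem_unitDisk, norm_conj, ← mem_unitDisk]

theorem analyticOnNhd_comp_mul_left {f : ℂ → ℂ} (hf : AnalyticOnNhd ℂ f unitDisk) {c : ℂ}
    (hc : c ∈ unitDisk) : AnalyticOnNhd ℂ (fun x => f (c * x)) unitDisk :=
  hf.comp (analyticOnNhd_const.mul analyticOnNhd_id) fun _ hx => mul_mem_unitDisk hc hx

theorem tcoeff_congr {f g : ℂ → ℂ} (hfg : EqOn f g unitDisk) (j : ℕ) :
    tcoeff f j = tcoeff g j := by
  rw [tcoeff, tcoeff,
    (hfg.eventuallyEq_of_mem unitDisk_mem_nhds_zero).iteratedDeriv_eq]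

theorem tcoeff_comp_mul_left (f : ℂ → ℂ) (c : ℂ) (j : ℕ) :
    tcoeff (fun x => f (c * x)) j = c ^ j * tcoeff f j := by
  rw [tcoeff, tcoeff, iteratedDeriv_comp_mul_left, mul_zero, smul_eq_mul, mul_div_assoc]

theorem hasSum_tcoeff {f : ℂ → ℂ} (hf : AnalyticOnNhd ℂ f unitDisk) {z : ℂ}
    (hz : z ∈ unitDisk) : HasSum (fun j => tcoeff f j * z ^ j) (f z) := by
  refine (hasSum_taylorSeries_on_ball hf.differentiableOn hz).congr_fun fun j => ?_
  rw [tcoeff, sub_zero, smul_eq_mul, smul_eq_mul]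
  ring

/-- The generating function `(1 - x)^{-(α+2)}` of the reproducing kernels of `A_α²`: the kernel at
`u` is `z ↦ bergmanKernel α (conj u * z)`. -/
def bergmanKernel (α : ℝ) (x : ℂ) : ℂ := 1 / (1 - x) ^ ((α : ℂ) + 2)

theorem hasFPowerSeriesOnBall_bergmanKernel (α : ℝ) :
    HasFPowerSeriesOnBall (bergmanKernel α)
      (.ofScalars ℂ fun j => Ring.choose ((α : ℂ) + 2 + j - 1) j) 0 1 :=
  one_div_one_sub_cpow_hasFPowerSeriesOnBall_zero _

theorem analyticOnNhd_bergmanKernel (α : ℝ) : AnalyticOnNhd ℂ (bergmanKernel α) unitDisk := by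
  have := (hasFPowerSeriesOnBall_bergmanKernel α).analyticOnNhd
  rwa [← ENNReal.ofReal_one, eball_ofReal] at this

theorem bergmanKernel_conj (α : ℝ) {x : ℂ} (hx : x ∈ unitDisk) :
    bergmanKernel α (conj x) = conj (bergmanKernel α x) := by
  have harg : (1 - x).arg ≠ Real.pi := (mem_slitPlane_iff_arg.mp <| by
    simpa [sub_eq_add_neg] using mem_slitPlane_of_norm_lt_one (z := -x)
      (by simpa using mem_unitDisk.mp hx)).1
  have hcpow := conj_cpow (1 - x) ((α : ℂ) + 2) harg
  simp only [map_sub, map_one, map_add, conj_ofReal, map_ofNat] at hcpow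
  rw [bergmanKernel, bergmanKernel, hcpow, map_div₀, map_one]

theorem wb2_pos {α : ℝ} (hα : -1 < α) (j : ℕ) : 0 < wb2 α j := by
  have hnum : 0 < Real.Gamma (α + 2) := Real.Gamma_pos_of_pos (by linarith)
  have hden : 0 < Real.Gamma (j + α + 2) :=
    Real.Gamma_pos_of_pos (by linarith [(j.cast_nonneg : (0 : ℝ) ≤ j)])
  rw [wb2]
  positivity

theorem wb2_ne_zero {α : ℝ} (hα : -1 < α) (j : ℕ) : (wb2 α j : ℂ) ≠ 0 :=
  ofReal_ne_zero.mpr (wb2_pos hα j).ne'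

theorem inv_wb2_eq_choose {α : ℝ} (hα : -1 < α) (j : ℕ) :
    (wb2 α j : ℂ)⁻¹ = Ring.choose ((α : ℂ) + 2 + j - 1) j := by
  have hpole : ∀ k : ℕ, (α : ℂ) + 2 ≠ -k := by
    intro k hk
    have hk' : α + 2 = -(k : ℝ) := by exact_mod_cast hk
    linarith [(k.cast_nonneg : (0 : ℝ) ≤ k)]
  have hfactorial : (j.factorial : ℂ) ≠ 0 := by exact_mod_cast j.factorial_ne_zero
  have hpochhammer : (j.factorial : ℂ) * Ring.choose ((α : ℂ) + 2 + j - 1) j =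
      Gamma (α + 2 + j) / Gamma (α + 2) := by
    rw [Gamma_add_nat_div_Gamma_eq _ hpole, ← Ring.multichoose_eq, ← nsmul_eq_mul,
      Ring.factorial_nsmul_multichoose_eq_ascPochhammer, Polynomial.ascPochhammer_smeval_eq_eval]
  apply mul_left_cancel₀ hfactorial
  rw [hpochhammer, wb2]
  push_cast [← Gamma_ofReal]
  rw [inv_div, show (j : ℂ) + α + 2 = α + 2 + j by ring]
  field_simp

theorem tcoeff_bergmanKernel {α : ℝ} (hα : -1 < α) (j : ℕ) :
    tcoeff (bergmanKernel α) j = (wb2 α j : ℂ)⁻¹ := by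
  have h := (hasFPowerSeriesOnBall_bergmanKernel α).factorial_smul 1 j
  rw [← iteratedDeriv_eq_iteratedFDeriv] at h
  rw [tcoeff, ← h, inv_wb2_eq_choose hα]
  simp [j.factorial_ne_zero]

theorem iteratedDeriv_bergmanKernel_zero_ne_zero {α : ℝ} (hα : -1 < α) (j : ℕ) :
    iteratedDeriv j (bergmanKernel α) 0 ≠ 0 := by
  have h : tcoeff (bergmanKernel α) j ≠ 0 := by
    rw [tcoeff_bergmanKernel hα]
    exact inv_ne_zero (wb2_ne_zero hα j)
  exact (div_ne_zero_iff.mp h).1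

theorem analyticOnNhd_iteratedDeriv_bergmanKernel (α : ℝ) (n : ℕ) :
    AnalyticOnNhd ℂ (iteratedDeriv n (bergmanKernel α)) unitDisk := by
  rw [iteratedDeriv_eq_iterate]
  exact (analyticOnNhd_bergmanKernel α).iterated_deriv n

namespace BergmanModel

variable {α : ℝ} {H : Type} [NormedAddCommGroup H] [InnerProductSpace ℂ H] {M : BergmanModel α H}

/-- `M.IsKernelAt u k` says that the vector `k` is the reproducing kernel
`z ↦ (1 - conj u * z)^{-(α+2)}` of `A_α²` at `u`, i.e. `kern α 0 u`. -/
def IsKernelAt (M : BergmanModel α H) (u : ℂ) (k : H) : Prop :=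
  EqOn (M.emb k) (fun z => bergmanKernel α (conj u * z)) unitDisk

theorem exists_isKernelAt (hα : -1 < α) (M : BergmanModel α H) {u : ℂ} (hu : u ∈ unitDisk) :
    ∃ k, M.IsKernelAt u k := by
  have hcu : conj u ∈ unitDisk := conj_mem_unitDisk hu
  have hK := analyticOnNhd_bergmanKernel α
  refine M.exists_rep _ (analyticOnNhd_comp_mul_left hK hcu) ?_
  refine (hasSum_tcoeff hK (mul_mem_unitDisk hcu hcu)).summable.norm.congr fun j => ?_
  have hpos := wb2_pos hα j
  rw [tcoeff_comp_mul_left, tcoeff_bergmanKernel hα]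
  simp only [norm_mul, norm_inv, norm_pow, norm_real, Real.norm_of_nonneg hpos.le]
  field_simp
  ring

theorem IsKernelAt.inner_eq (hα : -1 < α) {u : ℂ} {k : H} (hk : M.IsKernelAt u k)
    (hu : u ∈ unitDisk) (f : H) : inner ℂ k f = M.emb f u := by
  rw [M.inner_eq, ← (hasSum_tcoeff (M.analyticOn f) hu).tsum_eq]
  refine tsum_congr fun j => ?_
  have hne := wb2_ne_zero hα j
  rw [tcoeff_congr hk, tcoeff_comp_mul_left, tcoeff_bergmanKernel hα]
  simp only [map_mul, map_inv₀, map_pow, conj_conj, conj_ofReal]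
  field_simp

variable {J : H → H}

theorem IsKernelAt.conjugation
    (hJ : ∀ f : H, ∀ z ∈ unitDisk, M.emb (J f) z = conj (M.emb f (conj z)))
    {u : ℂ} {k : H} (hk : M.IsKernelAt u k) (hu : u ∈ unitDisk) :
    M.IsKernelAt (conj u) (J k) := by
  intro z hz
  have hcz : conj z ∈ unitDisk := conj_mem_unitDisk hz
  rw [hJ k z hz, hk hcz, ← bergmanKernel_conj α (mul_mem_unitDisk (conj_mem_unitDisk hu) hcz),
    map_mul, Complex.conj_conj z]

theorem IsKernelAt.iteratedDeriv_emb {u : ℂ} {k : H} (hk : M.IsKernelAt u k) (n : ℕ) {z : ℂ}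
    (hz : z ∈ unitDisk) :
    iteratedDeriv n (M.emb k) z = conj u ^ n * iteratedDeriv n (bergmanKernel α) (conj u * z) := by
  rw [(hk.eventuallyEq_of_mem (isOpen_unitDisk.mem_nhds hz)).iteratedDeriv_eq,
    iteratedDeriv_comp_mul_left, smul_eq_mul]

theorem emb_apply_kernel_comm [CompleteSpace H] (hα : -1 < α)
    (hJ : ∀ f : H, ∀ z ∈ unitDisk, M.emb (J f) z = conj (M.emb f (conj z)))
    {T : H →L[ℂ] H} (hsymm : ∀ f : H, J (ContinuousLinearMap.adjoint T (J f)) = T f)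
    {z u : ℂ} (hz : z ∈ unitDisk) (hu : u ∈ unitDisk) {kz ku : H}
    (hkz : M.IsKernelAt (conj z) kz) (hku : M.IsKernelAt (conj u) ku) :
    M.emb (T ku) z = M.emb (T kz) u := by
  have hJku : M.IsKernelAt u (J ku) := by simpa using hku.conjugation hJ (conj_mem_unitDisk hu)
  calc M.emb (T ku) z
      = conj (M.emb (ContinuousLinearMap.adjoint T (J ku)) (conj z)) := by
        rw [← hsymm ku, hJ _ z hz]
    _ = conj (inner ℂ (T kz) (J ku)) := by
        rw [← hkz.inner_eq hα (conj_mem_unitDisk hz), ContinuousLinearMap.adjoint_inner_right]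
    _ = M.emb (T kz) u := by rw [inner_conj_symm, hJku.inner_eq hα hu]

theorem symm_identity_of_conj_symm [CompleteSpace H] (hα : -1 < α)
    (hJ : ∀ f : H, ∀ z ∈ unitDisk, M.emb (J f) z = conj (M.emb f (conj z)))
    {T : H →L[ℂ] H} (hsymm : ∀ f : H, J (ContinuousLinearMap.adjoint T (J f)) = T f)
    {ψ φ : ℂ → ℂ} (hφ : MapsTo φ unitDisk unitDisk) {n : ℕ}
    (hT : ∀ f : H, ∀ z ∈ unitDisk, M.emb (T f) z = ψ z * iteratedDeriv n (M.emb f) (φ z))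
    {z u : ℂ} (hz : z ∈ unitDisk) (hu : u ∈ unitDisk) :
    ψ z * (u ^ n * iteratedDeriv n (bergmanKernel α) (u * φ z)) =
      ψ u * (z ^ n * iteratedDeriv n (bergmanKernel α) (z * φ u)) := by
  obtain ⟨kz, hkz⟩ := M.exists_isKernelAt hα (conj_mem_unitDisk hz)
  obtain ⟨ku, hku⟩ := M.exists_isKernelAt hα (conj_mem_unitDisk hu)
  have h := emb_apply_kernel_comm hα hJ hsymm hz hu hkz hku
  rwa [hT ku z hz, hT kz u hu, hku.iteratedDeriv_emb n (hφ hz), hkz.iteratedDeriv_emb n (hφ hu),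
    conj_conj, conj_conj] at h

end BergmanModel

/-- If `D_{ψ,φ,n}` is bounded and `J`-symmetric on `A_α²`, then `φ` is
univalent (injective) on `𝔻`. -/
theorem stmt_5 (α : ℝ) (hα : -1 < α) (n : ℕ) (hn : 1 ≤ n)
    (H : Type) [NormedAddCommGroup H] [InnerProductSpace ℂ H] [CompleteSpace H]
    (M : BergmanModel α H)
    (ψ : ℂ → ℂ) (hψa : AnalyticOnNhd ℂ ψ unitDisk)
    (hψ0 : ∃ z ∈ unitDisk, ψ z ≠ 0)
    (φ : ℂ → ℂ) (hφa : AnalyticOnNhd ℂ φ unitDisk)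
    (hφm : ∀ z ∈ unitDisk, φ z ∈ unitDisk)
    (hφnc : ∃ z ∈ unitDisk, ∃ w ∈ unitDisk, φ z ≠ φ w)
    (T : H →L[ℂ] H)
    (hT : ∀ f : H, ∀ z ∈ unitDisk,
      M.emb (T f) z = ψ z * iteratedDeriv n (M.emb f) (φ z))
    (Jm : H → H)
    (hJm : ∀ f : H, ∀ z ∈ unitDisk,
      M.emb (Jm f) z = (starRingEnd ℂ) (M.emb f ((starRingEnd ℂ) z)))
    (hsym : ∀ f : H, Jm (ContinuousLinearMap.adjoint T (Jm f)) = T f) :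
    Set.InjOn φ unitDisk := by
  have hsymm := fun z (hz : z ∈ unitDisk) u (hu : u ∈ unitDisk) =>
    M.symm_identity_of_conj_symm hα hJm hsym hφm hT hz hu
  have hinj : InjOn φ {z ∈ unitDisk | z ^ n ≠ 0} :=
    injOn_of_symm_identity isOpen_unitDisk isPreconnected_unitDisk isPreconnected_unitDisk
      unitDisk_mem_nhds_zero
      (fun z hz => analyticOnNhd_comp_mul_left (analyticOnNhd_iteratedDeriv_bergmanKernel α n) hz)
      (iteratedDeriv_bergmanKernel_zero_ne_zero hα n)
      (by simpa only [iteratedDeriv_succ] using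
        iteratedDeriv_bergmanKernel_zero_ne_zero hα (n + 1))
      hψa hψ0 hφa hφm hφnc hsymm
  have hsub : unitDisk \ {0} ⊆ {z ∈ unitDisk | z ^ n ≠ 0} :=
    fun _ hz => ⟨hz.1, pow_ne_zero n hz.2⟩
  exact injOn_of_injOn_diff_singleton isOpen_unitDisk hφa.continuousOn
    (fun _ => isOpen_image_of_nonconstant hφa isPreconnected_unitDisk hφnc)
    (hinj.mono hsub)
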